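/- Let N ≥ 3 and let w₁ ≥ w₂ ≥ … ≥ w_N ≥ 0 be real numbers with Σₖ wₖ = 1 and Σ_{k=3}^{N} wₖ ≤ 2w₂. Then there exist nonnegative reals a, b with w₂ ≥ a ≥ b ≥ 0 and a + b = Σ_{k=3}^{N} wₖ such that (w₁, w₂, a, b) is a probability vector whose Shannon entropy is at most the Shannon entropy of (w₁, …, w_N). That is, any scheme with at most twice the second weight left in its tail can be collapsed to a four-outcome distribution with the same two largest weights and no greater entropy. -/

import Mathlib

noncomputable section

/-- `−p·log₂ p`, one term of the Shannon entropy (equals `0` at `p = 0`). -/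
def nmlb (p : ℝ) : ℝ := -(p * Real.logb 2 p)

/-!
Greedy packing into bins of capacity `m = w₂`: with `S` the tail sum, the pair
`(min m S, S - min m S)`, padded by zeros, majorizes the tail, so every concave function vanishing
at `0` has the smaller sum on the pair. The majorization is never needed in full: adding the tail
weights one at a time, each step is either a spreading of two arguments with fixed sum or a
merging of two arguments into one.
-/

section Concave

variable {𝕜 β ι : Type*} [Field 𝕜] [LinearOrder 𝕜] [IsStrictOrderedRing 𝕜]
  [AddCommGroup β] [PartialOrder β] [IsOrderedAddMonoid β] [Module 𝕜 β] {f : 𝕜 → β}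

theorem concaveOn_map_add_map_le_of_add_eq_add {s : Set 𝕜} (hf : ConcaveOn 𝕜 s f)
    {x y p q : 𝕜} (hx : x ∈ s) (hy : y ∈ s) (hp : p ∈ Set.Icc x y) (h : p + q = x + y) :
    f x + f y ≤ f p + f q := by
  obtain ⟨a, b, ha, hb, hab, rfl⟩ := Icc_subset_segment hp
  have hq : q = b • x + a • y := by
    simp only [smul_eq_mul] at h ⊢
    linear_combination h - (x + y) * hab
  calc f x + f y = (a + b) • f x + (a + b) • f y := by rw [hab, one_smul, one_smul]
    _ = (a • f x + b • f y) + (b • f x + a • f y) := by module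
    _ ≤ f (a • x + b • y) + f q := by
      rw [hq]
      exact add_le_add (hf.2 hx hy ha hb hab) (hf.2 hx hy hb ha (add_comm b a ▸ hab))

theorem concaveOn_Ici_map_add_le (hf : ConcaveOn 𝕜 (Set.Ici 0) f) (hf0 : 0 ≤ f 0)
    {p q : 𝕜} (hp : 0 ≤ p) (hq : 0 ≤ q) : f (p + q) ≤ f p + f q :=
  (le_add_of_nonneg_left hf0).trans <|
    concaveOn_map_add_map_le_of_add_eq_add hf Set.self_mem_Ici (add_nonneg hp hq)
      ⟨hp, le_add_of_nonneg_right hq⟩ (zero_add _).symm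

theorem concaveOn_Ici_map_min_add_add_map_sub_le (hf : ConcaveOn 𝕜 (Set.Ici 0) f) (hf0 : f 0 = 0)
    {m S x : 𝕜} (hS : 0 ≤ S) (hx : x ∈ Set.Icc 0 m) :
    f (min m (S + x)) + f (S + x - min m (S + x)) ≤ f (min m S) + f (S - min m S) + f x := by
  obtain ⟨hx0, hxm⟩ := hx
  rcases le_total m S with hmS | hSm
  · rw [min_eq_left hmS, min_eq_left (le_add_of_le_of_nonneg hmS hx0), add_sub_right_comm,
      add_assoc]
    gcongr
    exact concaveOn_Ici_map_add_le hf hf0.ge (sub_nonneg.2 hmS) hx0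
  · rw [min_eq_right hSm, sub_self, hf0, add_zero]
    rcases le_total m (S + x) with hmSx | hSxm
    · rw [min_eq_left hmSx, add_comm (f m)]
      exact concaveOn_map_add_map_le_of_add_eq_add hf (sub_nonneg.2 hmSx) (hx0.trans hxm)
        ⟨by linarith, hSm⟩ (sub_add_cancel _ _).symm
    · rw [min_eq_right hSxm, sub_self, hf0, add_zero]
      exact concaveOn_Ici_map_add_le hf hf0.ge hS hx0

theorem concaveOn_Ici_map_min_sum_add_map_sub_le_sum (hf : ConcaveOn 𝕜 (Set.Ici 0) f)
    (hf0 : f 0 = 0) {m : 𝕜} (hm : 0 ≤ m) {w : ι → 𝕜} {s : Finset ι}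
    (hw : ∀ k ∈ s, w k ∈ Set.Icc 0 m) :
    f (min m (∑ k ∈ s, w k)) + f (∑ k ∈ s, w k - min m (∑ k ∈ s, w k)) ≤ ∑ k ∈ s, f (w k) := by
  induction s using Finset.cons_induction with
  | empty => simp [hm, hf0]
  | cons i s hi ih =>
    obtain ⟨hwi, hws⟩ := Finset.forall_mem_cons hi _ |>.1 hw
    have hsum_nonneg : 0 ≤ ∑ k ∈ s, w k := Finset.sum_nonneg fun k hk => (hws k hk).1
    rw [Finset.sum_cons, Finset.sum_cons, add_comm (w i), add_comm (f (w i))]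
    exact (concaveOn_Ici_map_min_add_add_map_sub_le hf hf0 hsum_nonneg hwi).trans
      (add_le_add_left (ih hws) _)

theorem collapse_to_four_outcomes_general [Fintype ι] [DecidableEq ι]
    (hf : ConcaveOn 𝕜 (Set.Ici 0) f) (hf0 : f 0 = 0) {w : ι → 𝕜} (hw : ∀ k, 0 ≤ w k) {i j : ι}
    (hij : i ≠ j) (hle : ∀ k ≠ i, w k ≤ w j) (htail : ∑ k ∈ {i, j}ᶜ, w k ≤ 2 * w j) :
    ∃ a b : 𝕜, a ≤ w j ∧ b ≤ a ∧ 0 ≤ b ∧ a + b = ∑ k ∈ {i, j}ᶜ, w k ∧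
      f (w i) + f (w j) + f a + f b ≤ ∑ k, f (w k) := by
  set S := ∑ k ∈ {i, j}ᶜ, w k
  have hcollapse : f (min (w j) S) + f (S - min (w j) S) ≤ ∑ k ∈ {i, j}ᶜ, f (w k) :=
    concaveOn_Ici_map_min_sum_add_map_sub_le_sum hf hf0 (hw j) fun k hk =>
      ⟨hw k, hle k fun hki => Finset.mem_compl.1 hk (hki ▸ Finset.mem_insert_self i {j})⟩
  have hordered : S - min (w j) S ≤ min (w j) S := by
    have hS : 0 ≤ S := Finset.sum_nonneg fun k _ => hw k
    rcases min_cases (w j) S with ⟨h, -⟩ | ⟨h, -⟩ <;> rw [h] <;> linarith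
  refine ⟨min (w j) S, S - min (w j) S, min_le_left _ _, hordered,
    sub_nonneg.2 (min_le_right _ _), add_sub_cancel _ _, ?_⟩
  rw [← Finset.sum_add_sum_compl {i, j} fun k => f (w k), Finset.sum_pair hij, add_assoc]
  gcongr

end Concave

theorem nmlb_eq_smul_negMulLog : nmlb = (Real.log 2)⁻¹ • Real.negMulLog := by
  funext p
  simp only [nmlb, Real.negMulLog, Real.logb, Pi.smul_apply, smul_eq_mul]
  ring

theorem concaveOn_nmlb : ConcaveOn ℝ (Set.Ici 0) nmlb :=
  nmlb_eq_smul_negMulLog ▸ Real.concaveOn_negMulLog.smul (inv_nonneg.2 (Real.log_nonneg one_le_two))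

theorem nmlb_zero : nmlb 0 = 0 := by simp [nmlb]

theorem filter_two_le_val_eq_compl_pair {N : ℕ} (hN : 1 < N) :
    Finset.univ.filter (fun k : Fin N => 2 ≤ (k : ℕ)) = {⟨0, by omega⟩, ⟨1, hN⟩}ᶜ := by
  ext k
  simp only [Finset.mem_filter_univ, Finset.mem_compl, Finset.mem_insert, Finset.mem_singleton,
    Fin.ext_iff]
  omega

/-- Any decreasingly ordered probability vector `(w₁, …, w_N)` whose tail `Σ_{k≥3} wₖ` is at
most `2w₂` can be collapsed to a four-outcome distribution `(w₁, w₂, a, b)` with the same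
two largest weights, `w₂ ≥ a ≥ b ≥ 0`, `a + b = Σ_{k≥3} wₖ`, and no greater Shannon
entropy. -/
theorem collapse_to_four_outcomes (N : ℕ) (hN : 3 ≤ N) (w : Fin N → ℝ)
    (hord : ∀ i j : Fin N, i ≤ j → w j ≤ w i)
    (hnn : ∀ k, 0 ≤ w k) (hsum : ∑ k, w k = 1)
    (htail : (∑ k ∈ Finset.univ.filter (fun k : Fin N => 2 ≤ (k : ℕ)), w k)
        ≤ 2 * w ⟨1, by omega⟩) :
    ∃ a b : ℝ, a ≤ w ⟨1, by omega⟩ ∧ b ≤ a ∧ 0 ≤ b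
      ∧ a + b = (∑ k ∈ Finset.univ.filter (fun k : Fin N => 2 ≤ (k : ℕ)), w k)
      ∧ nmlb (w ⟨0, by omega⟩) + nmlb (w ⟨1, by omega⟩) + nmlb a + nmlb b
          ≤ ∑ k, nmlb (w k) := by
  rw [filter_two_le_val_eq_compl_pair (by omega)] at htail ⊢
  exact collapse_to_four_outcomes_general concaveOn_nmlb nmlb_zero hnn (by simp)
    (fun _ hk => hord _ _ (Nat.one_le_iff_ne_zero.2 (Fin.val_ne_of_ne hk))) htail

end
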